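/- For every positive integer n, the number of quadruples (x₁, x₂, x₃, x₄) ∈ ℤ⁴ with x₁² + x₁x₂ + x₂² + x₃² + x₃x₄ + x₄² = n, x₁ ≡ 1 (mod 2), and x₂ ≡ x₃ ≡ x₄ ≡ 0 (mod 2) equals 2σ(n) − 6σ(n/2) − 6σ(n/3) + 4σ(n/4) + 18σ(n/6) − 12σ(n/12). -/

import Mathlib

/-!
The quaternary form is `N z + N w` for two Eisenstein integers `z`, `w`, and the congruences say
`z ≡ 1` and `w ≡ 0` modulo `2`. As `2` is inert, a norm is even only for multiples of `2`. Hence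
there are no solutions for even `n`, and for odd `n` exactly one of `z`, `w` is a multiple of `2`;
exchanging `z` and `w` and multiplying `z` by units, which permute the three nonzero residue classes
modulo `2`, shows that the solutions are one sixth of all pairs with `N z + N w = n`.

By unique factorization the number of elements of norm `k` is `6 ∑_{d ∣ k} χ(d)`, where `χ` is the
Legendre symbol modulo `3`. Summing the products over `k + l = n` requires the convolution square of
`∑_{d ∣ k} χ(d)`. It follows from Liouville's elementary identity applied to the indicator function
`F` of the multiples of `3`, because `F (a - b) - F (a + b) = χ(a) χ(b)`.
-/

open Finset

/-- `sigmaDiv n k = σ(n/k) = ∑_{d ∣ n/k} d`, interpreted as `0` when `k` does not divide `n`. -/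
def sigmaDiv (n k : ℕ) : ℤ := if k ∣ n then ∑ d ∈ (n / k).divisors, (d : ℤ) else 0

/-! ### Eisenstein integers -/

theorem exists_abs_two_mul_sub_mul_le (a : ℤ) {n : ℤ} (hn : 0 < n) :
    ∃ q, |2 * (a - n * q)| ≤ n := by
  refine ⟨(2 * a + n) / (2 * n), ?_⟩
  have := Int.emod_nonneg (2 * a + n) (b := 2 * n) (by omega)
  have := Int.emod_lt_of_pos (2 * a + n) (b := 2 * n) (by omega)
  have := Int.mul_ediv_add_emod (2 * a + n) (2 * n)
  rw [abs_le]
  constructor <;> linarith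

theorem exists_dvd_sq_add_self_add_one {p : ℕ} (hp : p.Prime) (h3 : p % 3 = 1) :
    ∃ t : ℤ, (p : ℤ) ∣ t ^ 2 + t + 1 := by
  have := Fact.mk hp
  have hcard : 3 ∣ Fintype.card (ZMod p)ˣ := by
    rw [ZMod.card_units]
    omega
  obtain ⟨u, hu⟩ := exists_prime_orderOf_dvd_card 3 hcard
  obtain ⟨t, ht⟩ := ZMod.intCast_surjective (u : ZMod p)
  refine ⟨t, (ZMod.intCast_zmod_eq_zero_iff_dvd _ p).mp ?_⟩
  have hu3 : (u : ZMod p) ^ 3 = 1 := by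
    rw [← Units.val_pow_eq_pow_val, ← hu, pow_orderOf_eq_one, Units.val_one]
  have hu1 : (u : ZMod p) - 1 ≠ 0 := by
    rw [sub_ne_zero, ne_eq, Units.val_eq_one]
    rintro rfl
    simp at hu
  push_cast
  rw [ht]
  exact (mul_eq_zero.mp (by linear_combination hu3)).resolve_left hu1

/-- The Eisenstein integers. The generator `ω` satisfies `ω ^ 2 = -1 + ω`, so it is a primitive
sixth (not third) root of unity; this makes the norm of `x + y * ω` equal to
`x ^ 2 + x * y + y ^ 2`. -/
abbrev EisensteinInt := QuadraticAlgebra ℤ (-1) 1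

namespace EisensteinInt

open QuadraticAlgebra

theorem norm_eq (z : EisensteinInt) : z.norm = z.re ^ 2 + z.re * z.im + z.im ^ 2 := by
  rw [norm_def]
  ring

theorem three_mul_re_sq_le (z : EisensteinInt) : 3 * z.re ^ 2 ≤ 4 * z.norm := by
  rw [norm_eq]
  linarith [sq_nonneg (2 * z.im + z.re)]

theorem three_mul_im_sq_le (z : EisensteinInt) : 3 * z.im ^ 2 ≤ 4 * z.norm := by
  rw [norm_eq]
  linarith [sq_nonneg (2 * z.re + z.im)]

theorem norm_nonneg (z : EisensteinInt) : 0 ≤ z.norm := by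
  linarith [three_mul_re_sq_le z, sq_nonneg z.re]

theorem norm_eq_zero {z : EisensteinInt} : z.norm = 0 ↔ z = 0 := by
  refine ⟨fun h => QuadraticAlgebra.ext ?_ ?_, fun h => by rw [h, QuadraticAlgebra.norm_zero]⟩
  · exact pow_eq_zero_iff two_ne_zero |>.mp (by linarith [three_mul_re_sq_le z, sq_nonneg z.re])
  · exact pow_eq_zero_iff two_ne_zero |>.mp (by linarith [three_mul_im_sq_le z, sq_nonneg z.im])

theorem norm_pos {z : EisensteinInt} : 0 < z.norm ↔ z ≠ 0 := by
  rw [(norm_nonneg z).lt_iff_ne', ne_eq, norm_eq_zero]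

theorem intCast_norm (z : EisensteinInt) : (z.norm : EisensteinInt) = z * star z :=
  algebraMap_norm_eq_mul_star z

theorem exists_norm_sub_mul_lt (z : EisensteinInt) {w : EisensteinInt} (hw : w ≠ 0) :
    ∃ q : EisensteinInt, (z - w * q).norm < w.norm := by
  have hn : 0 < w.norm := norm_pos.mpr hw
  obtain ⟨u, hu⟩ := exists_abs_two_mul_sub_mul_le (z * star w).re hn
  obtain ⟨v, hv⟩ := exists_abs_two_mul_sub_mul_le (z * star w).im hn
  have hmul : (z - w * ⟨u, v⟩) * star w = z * star w - w.norm * ⟨u, v⟩ := by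
    rw [intCast_norm]
    ring
  generalize z * star w = y at hu hv hmul
  have hy : (z - w * ⟨u, v⟩).norm * w.norm = (y - w.norm * ⟨u, v⟩).norm := by
    rw [← QuadraticAlgebra.norm_star w, ← map_mul, QuadraticAlgebra.norm_star w, hmul]
  have hbound (s t n : ℤ) (hs : |2 * s| ≤ n) (ht : |2 * t| ≤ n) :
      4 * (s ^ 2 + s * t + t ^ 2) ≤ 3 * n ^ 2 := by
    have hn := (abs_nonneg _).trans hs
    rw [← abs_of_nonneg hn] at hs ht
    nlinarith [sq_le_sq.mpr hs, sq_le_sq.mpr ht, sq_nonneg (s - t)]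
  have h := hbound _ _ _ hu hv
  refine ⟨⟨u, v⟩, lt_of_mul_lt_mul_right ?_ hn.le⟩
  rw [hy, norm_eq]
  simp only [re_sub, im_sub, re_mul, im_mul, re_intCast, im_intCast, Int.cast_id]
  ring_nf at h ⊢
  nlinarith [mul_pos hn hn]

open scoped Classical in
noncomputable instance : EuclideanDomain EisensteinInt where
  quotient z w := if hw : w = 0 then 0 else (exists_norm_sub_mul_lt z hw).choose
  remainder z w := z - w * if hw : w = 0 then 0 else (exists_norm_sub_mul_lt z hw).choose
  quotient_zero z := dif_pos rfl
  quotient_mul_add_remainder_eq z w := add_sub_cancel _ _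
  r := InvImage (· < ·) fun z => z.norm.natAbs
  r_wellFounded := (measure fun z : EisensteinInt => z.norm.natAbs).wf
  remainder_lt z w hw := by
    rw [InvImage, dif_neg hw]
    exact Int.natAbs_lt_natAbs_of_nonneg_of_lt (norm_nonneg _)
      (exists_norm_sub_mul_lt z hw).choose_spec
  mul_left_not_lt z w hw := by
    rw [InvImage, map_mul, Int.natAbs_mul, not_lt]
    exact Nat.le_mul_of_pos_right _ (Int.natAbs_pos.mpr (norm_eq_zero.not.mpr hw))

theorem prime_of_norm_eq {p : ℕ} (hp : p.Prime) {z : EisensteinInt} (hz : z.norm = p) :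
    Prime z := by
  have : IsLocalHom (QuadraticAlgebra.norm : EisensteinInt →* ℤ) :=
    ⟨fun _ => isUnit_iff_norm_isUnit.mpr⟩
  have : Irreducible z.norm := hz ▸ (Nat.prime_iff_prime_int.mp hp).irreducible
  exact this.of_map.prime

theorem prime_natCast_or_exists_norm_eq {p : ℕ} (hp : p.Prime) :
    Prime (p : EisensteinInt) ∨ ∃ z : EisensteinInt, z.norm = p := by
  rw [← irreducible_iff_prime, or_iff_not_imp_left]
  have isUnit_iff (z : EisensteinInt) : IsUnit z ↔ z.norm.natAbs = 1 := by
    rw [isUnit_iff_norm_isUnit, Int.isUnit_iff_natAbs_eq]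
  have norm_p : (p : EisensteinInt).norm.natAbs = p ^ 2 := by
    rw [QuadraticAlgebra.norm_natCast, Int.natAbs_pow, Int.natAbs_natCast]
  intro hirr
  have hunit : ¬IsUnit (p : EisensteinInt) := by
    rw [isUnit_iff, norm_p, Nat.pow_eq_one]
    simp [hp.ne_one]
  obtain ⟨z, w, hzw, hz, hw⟩ : ∃ z w : EisensteinInt, (p : EisensteinInt) = z * w ∧
      ¬IsUnit z ∧ ¬IsUnit w := by
    simpa [irreducible_iff, hunit] using hirr
  have hnorm : z.norm.natAbs * w.norm.natAbs = p ^ 2 := by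
    rw [← Int.natAbs_mul, ← map_mul, ← hzw, norm_p]
  have hz' := ((hp.mul_eq_prime_sq_iff (mt (isUnit_iff z).mpr hz) (mt (isUnit_iff w).mpr hw)).mp
    hnorm).1
  exact ⟨z, by rw [← hz', Int.natAbs_of_nonneg (norm_nonneg z)]⟩

theorem prime_natCast_of_mod_three_eq_two {p : ℕ} (hp : p.Prime) (h3 : p % 3 = 2) :
    Prime (p : EisensteinInt) := by
  refine (prime_natCast_or_exists_norm_eq hp).resolve_right ?_
  rintro ⟨z, hz⟩
  rw [norm_eq] at hz
  have hmod : ∀ x y : ZMod 3, x ^ 2 + x * y + y ^ 2 ≠ 2 := by decide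
  refine hmod z.re z.im ?_
  have hp3 : (p : ZMod 3) = 2 := by rw [← ZMod.natCast_mod, h3, Nat.cast_two]
  exact_mod_cast (congrArg (Int.cast : ℤ → ZMod 3) hz).trans (by exact_mod_cast hp3)

theorem natCast_dvd_iff {n : ℕ} {z : EisensteinInt} :
    (n : EisensteinInt) ∣ z ↔ (n : ℤ) ∣ z.re ∧ (n : ℤ) ∣ z.im := by
  rw [← algebraMap_dvd_iff, map_natCast]

theorem exists_norm_eq_of_mod_three_eq_one {p : ℕ} (hp : p.Prime) (h3 : p % 3 = 1) :
    ∃ z : EisensteinInt, z.norm = p := by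
  refine (prime_natCast_or_exists_norm_eq hp).resolve_left fun hprime => ?_
  obtain ⟨t, ht⟩ := exists_dvd_sq_add_self_add_one hp h3
  have hdvd : (p : EisensteinInt) ∣ ⟨t, 1⟩ * star ⟨t, 1⟩ := by
    rw [← intCast_norm, norm_eq, mul_one, one_pow]
    exact_mod_cast map_dvd (Int.castRingHom EisensteinInt) ht
  have hone : ¬(p : ℤ) ∣ 1 := by exact_mod_cast hp.not_dvd_one
  rcases hprime.dvd_or_dvd hdvd with h | h
  · exact hone (natCast_dvd_iff.mp h).2
  · exact hone (dvd_neg.mp (natCast_dvd_iff.mp h).2)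

theorem dvd_or_star_dvd {z w : EisensteinInt} (hw : Prime w) (h : w ∣ (z.norm : EisensteinInt)) :
    w ∣ z ∨ star w ∣ z := by
  rw [intCast_norm] at h
  refine (hw.dvd_or_dvd h).imp_right fun h => ?_
  simpa only [starRingEnd_apply, star_star] using map_dvd (starRingEnd EisensteinInt) h

theorem not_dvd_star {p : ℕ} (hp : p.Prime) (h3 : p ≠ 3) {z : EisensteinInt} (hz : z.norm = p) :
    ¬z ∣ star z := by
  have hpZ := Nat.prime_iff_prime_int.mp hp
  intro h
  have hnorm : (p : ℤ) ∣ 3 * z.im ^ 2 := by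
    have := map_dvd QuadraticAlgebra.norm (dvd_sub_self_right.mpr h)
    rw [hz, norm_eq] at this
    simp only [re_sub, re_star, im_sub, im_star] at this
    exact this.trans (dvd_of_eq (by ring))
  have him : (p : ℤ) ∣ z.im := by
    refine hpZ.dvd_of_dvd_pow ((hpZ.dvd_or_dvd hnorm).resolve_left ?_)
    exact_mod_cast (Nat.prime_dvd_prime_iff_eq hp Nat.prime_three).not.mpr h3
  have hre : (p : ℤ) ∣ z.re := by
    refine hpZ.dvd_of_dvd_pow (n := 2) ?_
    have : z.re ^ 2 = p - z.im * (z.re + z.im) := by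
      rw [← hz, norm_eq]
      ring
    exact this ▸ dvd_sub_self_left.mpr (him.mul_right _)
  have hsq : (p : ℤ) * p ∣ p := by
    have hp_eq : z.re * z.re + z.re * z.im + z.im * z.im = p := by rw [← hz, norm_eq, sq, sq]
    exact (dvd_add (dvd_add (mul_dvd_mul hre hre) (mul_dvd_mul hre him))
      (mul_dvd_mul him him)).trans (dvd_of_eq hp_eq)
  exact hpZ.not_isUnit (hpZ.irreducible.squarefree p hsq)

/-- The Eisenstein integers of norm `n`, that is, the representations of `n` by the form
`x ^ 2 + x * y + y ^ 2`. -/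
def normFiber (n : ℕ) : Set EisensteinInt := {z | z.norm = n}

theorem finite_normFiber (n : ℕ) : (normFiber n).Finite := by
  refine .of_injOn (f := fun z : EisensteinInt => (z.re, z.im))
    (t := Set.Icc (-(2 * n : ℤ)) (2 * n) ×ˢ Set.Icc (-(2 * n : ℤ)) (2 * n)) ?_ ?_
    ((Set.finite_Icc _ _).prod (Set.finite_Icc _ _))
  · intro z hz
    have hre := three_mul_re_sq_le z
    have him := three_mul_im_sq_le z
    rw [hz] at hre him
    refine ⟨abs_le.mp (abs_le_of_sq_le_sq ?_ (by positivity)),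
      abs_le.mp (abs_le_of_sq_le_sq ?_ (by positivity))⟩ <;> nlinarith [sq_nonneg (n : ℤ)]
  · rintro z - w - h
    exact QuadraticAlgebra.ext (congrArg Prod.fst h) (congrArg Prod.snd h)

theorem normFiber_zero : normFiber 0 = {0} :=
  Set.ext fun _ => norm_eq_zero

theorem ncard_normFiber_one : (normFiber 1).ncard = 6 := by
  have hunits : normFiber 1 =
      ({⟨1, 0⟩, ⟨-1, 0⟩, ⟨0, 1⟩, ⟨0, -1⟩, ⟨1, -1⟩, ⟨-1, 1⟩} : Finset EisensteinInt) := by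
    ext ⟨x, y⟩
    have hmem : (⟨x, y⟩ : EisensteinInt) ∈ normFiber 1 ↔ x ^ 2 + x * y + y ^ 2 = 1 := by
      rw [normFiber, Set.mem_ofPred, norm_eq, Nat.cast_one]
    rw [hmem, mem_coe]
    simp only [mem_insert, mem_singleton, QuadraticAlgebra.mk.injEq]
    refine ⟨fun h => ?_, by rintro (⟨rfl, rfl⟩ | ⟨rfl, rfl⟩ | ⟨rfl, rfl⟩ | ⟨rfl, rfl⟩ | ⟨rfl, rfl⟩ |
      ⟨rfl, rfl⟩) <;> norm_num⟩
    obtain ⟨hx, hx'⟩ : -1 ≤ x ∧ x ≤ 1 := by constructor <;> nlinarith [sq_nonneg (2 * y + x)]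
    obtain ⟨hy, hy'⟩ : -1 ≤ y ∧ y ≤ 1 := by constructor <;> nlinarith [sq_nonneg (2 * x + y)]
    interval_cases x <;> interval_cases y <;> simp_all
  rw [hunits, Set.ncard_coe_finset]
  rfl

theorem ncard_normFiber_dvd {w : EisensteinInt} {k : ℕ} (hw : w.norm = k) (hk : k ≠ 0) (n : ℕ) :
    {z ∈ normFiber (k * n) | w ∣ z}.ncard = (normFiber n).ncard := by
  have hk' : (k : ℤ) ≠ 0 := Nat.cast_ne_zero.mpr hk
  have hw0 : w ≠ 0 := norm_pos.mp (by omega)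
  have himage : {z ∈ normFiber (k * n) | w ∣ z} = (w * ·) '' normFiber n := by
    ext z
    constructor
    · rintro ⟨hz, y, rfl⟩
      refine ⟨y, mul_left_cancel₀ hk' ?_, rfl⟩
      rw [← hw, ← map_mul, hz, hw, Nat.cast_mul]
    · rintro ⟨y, hy, rfl⟩
      exact ⟨by rw [normFiber, Set.mem_ofPred, map_mul, hw, hy, Nat.cast_mul], dvd_mul_right w y⟩
  rw [himage, Set.ncard_image_of_injective _ (mul_right_injective₀ hw0)]

theorem ncard_normFiber_natCast_dvd {p : ℕ} (hp : p.Prime) (n : ℕ) :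
    {z ∈ normFiber (p * n) | (p : EisensteinInt) ∣ z}.ncard =
      if p ∣ n then (normFiber (n / p)).ncard else 0 := by
  have hnorm : (p : EisensteinInt).norm = (p * p : ℕ) := by
    rw [QuadraticAlgebra.norm_natCast, Nat.cast_mul, sq]
  split_ifs with h
  · obtain ⟨m, rfl⟩ := h
    rw [Nat.mul_div_cancel_left m hp.pos, ← mul_assoc,
      ncard_normFiber_dvd hnorm (mul_ne_zero hp.ne_zero hp.ne_zero)]
  · convert Set.ncard_empty EisensteinInt
    refine Set.eq_empty_of_forall_notMem ?_
    rintro _ ⟨hz, y, rfl⟩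
    refine h (Nat.dvd_of_mul_dvd_mul_left hp.pos (Int.natCast_dvd_natCast.mp ⟨y.norm, ?_⟩))
    rw [← hnorm, ← map_mul, hz]

theorem dvd_natCast_of_norm_eq {w : EisensteinInt} {k : ℕ} (hw : w.norm = k) :
    w ∣ (k : EisensteinInt) :=
  ⟨star w, by rw [← intCast_norm, hw, Int.cast_natCast]⟩

theorem dvd_or_star_dvd_of_mem_normFiber {w z : EisensteinInt} {k n : ℕ} (hw : Prime w)
    (hk : w ∣ k) (hz : z ∈ normFiber (k * n)) : w ∣ z ∨ star w ∣ z := by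
  refine dvd_or_star_dvd hw ?_
  rw [hz, Nat.cast_mul, Int.cast_mul, Int.cast_natCast]
  exact hk.mul_right _

theorem ncard_normFiber_mul_of_prime_natCast {p : ℕ} (hp : p.Prime)
    (hprime : Prime (p : EisensteinInt)) (n : ℕ) :
    (normFiber (p * n)).ncard = if p ∣ n then (normFiber (n / p)).ncard else 0 := by
  rw [← ncard_normFiber_natCast_dvd hp]
  congr 1
  refine (Set.sep_eq_self_iff_mem_true.mpr fun z hz => ?_).symm
  simpa using dvd_or_star_dvd_of_mem_normFiber hprime dvd_rfl hz

theorem ncard_normFiber_three_mul (n : ℕ) :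
    (normFiber (3 * n)).ncard = (normFiber n).ncard := by
  have hnorm : (⟨1, 1⟩ : EisensteinInt).norm = (3 : ℕ) := rfl
  have hstar : (⟨1, 1⟩ : EisensteinInt) ∣ star ⟨1, 1⟩ := ⟨⟨1, -1⟩, rfl⟩
  rw [← ncard_normFiber_dvd hnorm three_ne_zero n]
  congr 1
  refine (Set.sep_eq_self_iff_mem_true.mpr fun z hz => ?_).symm
  exact (dvd_or_star_dvd_of_mem_normFiber (prime_of_norm_eq Nat.prime_three hnorm)
    (dvd_natCast_of_norm_eq hnorm) hz).elim id hstar.trans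

theorem ncard_normFiber_mul_of_mod_three_eq_one {p : ℕ} (hp : p.Prime) (h3 : p % 3 = 1) (n : ℕ) :
    (normFiber (p * n)).ncard + (if p ∣ n then (normFiber (n / p)).ncard else 0) =
      2 * (normFiber n).ncard := by
  obtain ⟨w, hw⟩ := exists_norm_eq_of_mod_three_eq_one hp h3
  have hw' : (star w).norm = p := by rw [QuadraticAlgebra.norm_star, hw]
  have hprime := prime_of_norm_eq hp hw
  have hunion : {z ∈ normFiber (p * n) | w ∣ z} ∪ {z ∈ normFiber (p * n) | star w ∣ z} =
      normFiber (p * n) := by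
    rw [← Set.sep_or, Set.sep_eq_self_iff_mem_true]
    exact fun z => dvd_or_star_dvd_of_mem_normFiber hprime (dvd_natCast_of_norm_eq hw)
  have hinter : {z ∈ normFiber (p * n) | w ∣ z} ∩ {z ∈ normFiber (p * n) | star w ∣ z} =
      {z ∈ normFiber (p * n) | (p : EisensteinInt) ∣ z} := by
    have hcoprime : IsCoprime w (star w) :=
      hprime.irreducible.coprime_iff_not_dvd.mpr (not_dvd_star hp (by rintro rfl; omega) hw)
    ext z
    rw [← Set.sep_and, Set.mem_sep_iff, Set.mem_sep_iff, ← Int.cast_natCast, ← hw, intCast_norm]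
    exact and_congr_right' ⟨fun h => hcoprime.mul_dvd h.1 h.2,
      fun h => ⟨dvd_of_mul_right_dvd h, dvd_of_mul_left_dvd h⟩⟩
  rw [← ncard_normFiber_natCast_dvd hp, ← hinter]
  nth_rewrite 1 [← hunion]
  rw [Set.ncard_union_add_ncard_inter _ _ ((finite_normFiber _).sep _) ((finite_normFiber _).sep _),
    ncard_normFiber_dvd hw hp.ne_zero, ncard_normFiber_dvd hw' hp.ne_zero, two_mul]

/-! ### Pairs of Eisenstein integers -/

/-- The pairs of Eisenstein integers whose norms sum to `n`, that is, the representations of `n` by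
`x₁ ^ 2 + x₁ * x₂ + x₂ ^ 2 + x₃ ^ 2 + x₃ * x₄ + x₄ ^ 2`. -/
def normSumFiber (n : ℕ) : Set (EisensteinInt × EisensteinInt) := {q | q.1.norm + q.2.norm = n}

theorem normSumFiber_eq_iUnion (n : ℕ) :
    normSumFiber n = ⋃ k ∈ (antidiagonal n : Set (ℕ × ℕ)), normFiber k.1 ×ˢ normFiber k.2 := by
  ext ⟨z, w⟩
  simp only [normSumFiber, normFiber, Set.mem_iUnion, Set.mem_prod, Set.mem_ofPred, mem_coe,
    HasAntidiagonal.mem_antidiagonal, exists_prop]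
  constructor
  · intro h
    lift z.norm to ℕ using norm_nonneg z with k
    lift w.norm to ℕ using norm_nonneg w with l
    exact ⟨(k, l), by exact_mod_cast h, rfl, rfl⟩
  · rintro ⟨k, hk, hz, hw⟩
    rw [hz, hw, ← hk, Nat.cast_add]

theorem finite_normSumFiber (n : ℕ) : (normSumFiber n).Finite := by
  rw [normSumFiber_eq_iUnion]
  exact (finite_toSet _).biUnion fun _ _ => (finite_normFiber _).prod (finite_normFiber _)

theorem ncard_normSumFiber (n : ℕ) :
    (normSumFiber n).ncard =
      ∑ k ∈ antidiagonal n, (normFiber k.1).ncard * (normFiber k.2).ncard := by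
  rw [normSumFiber_eq_iUnion, (finite_toSet _).ncard_biUnion, finsum_mem_coe_finset]
  · simp only [Set.ncard_prod]
  · exact fun _ _ => (finite_normFiber _).prod (finite_normFiber _)
  · intro k _ l _ hkl
    refine Set.disjoint_left.mpr fun q ⟨hk₁, hk₂⟩ ⟨hl₁, hl₂⟩ => hkl (Prod.ext ?_ ?_)
    · exact Nat.cast_injective (hk₁.symm.trans hl₁)
    · exact Nat.cast_injective (hk₂.symm.trans hl₂)

theorem two_dvd_iff {z : EisensteinInt} : 2 ∣ z ↔ 2 ∣ z.re ∧ 2 ∣ z.im :=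
  natCast_dvd_iff (n := 2)

theorem two_dvd_iff_even_norm {z : EisensteinInt} : 2 ∣ z ↔ Even z.norm := by
  rw [two_dvd_iff, norm_eq, ← even_iff_two_dvd, ← even_iff_two_dvd]
  simp only [Int.even_add, Int.even_mul, Int.even_pow, ne_eq, two_ne_zero, not_false_eq_true]
  tauto

theorem existsUnique_two_dvd_sub_omega_pow {z : EisensteinInt} (hz : ¬2 ∣ z) :
    ∃! i : Fin 3, 2 ∣ z - ω ^ (i : ℕ) := by
  refine existsUnique_of_exists_of_unique ?_ fun i j hi hj => ?_
  · rw [two_dvd_iff] at hz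
    obtain h | h | h : (2 ∣ z.re - 1 ∧ 2 ∣ z.im - 0) ∨ (2 ∣ z.re - 0 ∧ 2 ∣ z.im - 1) ∨
        (2 ∣ z.re - (-1) ∧ 2 ∣ z.im - 1) := by omega
    · exact ⟨0, two_dvd_iff.mpr h⟩
    · exact ⟨1, two_dvd_iff.mpr h⟩
    · exact ⟨2, two_dvd_iff.mpr h⟩
  · have hdistinct : ∀ i j : Fin 3, 2 ∣ (ω ^ (j : ℕ) - ω ^ (i : ℕ) : EisensteinInt).re ∧
        2 ∣ (ω ^ (j : ℕ) - ω ^ (i : ℕ) : EisensteinInt).im → i = j := by decide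
    refine hdistinct i j (two_dvd_iff.mp ?_)
    rw [← sub_sub_sub_cancel_left]
    exact dvd_sub hi hj

/-- The members `(z, w)` of `normSumFiber n` with `z ≡ c` and `w ≡ 0` modulo `2`. -/
def congrNormSumFiber (n : ℕ) (c : EisensteinInt) : Set (EisensteinInt × EisensteinInt) :=
  {q ∈ normSumFiber n | 2 ∣ q.1 - c ∧ 2 ∣ q.2}

theorem mem_congrNormSumFiber_unit_mul {n : ℕ} {c : EisensteinInt} (u : EisensteinIntˣ)
    {q : EisensteinInt × EisensteinInt} :
    (u * q.1, q.2) ∈ congrNormSumFiber n (u * c) ↔ q ∈ congrNormSumFiber n c := by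
  have hu : (u : EisensteinInt).norm = 1 :=
    (Int.isUnit_eq_one_or (isUnit_iff_norm_isUnit.mp u.isUnit)).resolve_right
      fun h => by linarith [norm_nonneg (u : EisensteinInt)]
  simp only [congrNormSumFiber, normSumFiber, Set.mem_ofPred, map_mul, hu, one_mul,
    ← mul_sub, Units.dvd_mul_left]

theorem ncard_congrNormSumFiber_unit (n : ℕ) (u : EisensteinIntˣ) :
    (congrNormSumFiber n u).ncard = (congrNormSumFiber n 1).ncard := by
  let e : EisensteinInt × EisensteinInt ≃ EisensteinInt × EisensteinInt :=
    u.mulLeft.prodCongr (.refl _)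
  have hpreimage : e ⁻¹' congrNormSumFiber n u = congrNormSumFiber n 1 := by
    ext q
    have h := mem_congrNormSumFiber_unit_mul u (n := n) (c := 1) (q := q)
    rwa [mul_one] at h
  rw [← hpreimage, Set.ncard_preimage_of_injective_subset_range e.injective
    (e.range_eq_univ ▸ Set.subset_univ _)]

theorem two_dvd_fst_iff_not_two_dvd_snd {n : ℕ} (hn : Odd n)
    {q : EisensteinInt × EisensteinInt} (hq : q ∈ normSumFiber n) : 2 ∣ q.1 ↔ ¬2 ∣ q.2 := by
  have hodd : Odd (q.1.norm + q.2.norm) := hq ▸ (Int.odd_coe_nat n).mpr hn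
  rw [two_dvd_iff_even_norm, two_dvd_iff_even_norm, Int.not_even_iff_odd,
    Int.odd_add'.mp hodd]

theorem ncard_normSumFiber_eq_two_mul {n : ℕ} (hn : Odd n) :
    (normSumFiber n).ncard = 2 * {q ∈ normSumFiber n | 2 ∣ q.2}.ncard := by
  have hswap : normSumFiber n \ {q ∈ normSumFiber n | 2 ∣ q.2} =
      Prod.swap ⁻¹' {q ∈ normSumFiber n | 2 ∣ q.2} := by
    ext q
    have hmem : q.swap ∈ normSumFiber n ↔ q ∈ normSumFiber n := by
      simp only [normSumFiber, Set.mem_ofPred, Prod.fst_swap, Prod.snd_swap, add_comm]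
    rw [Set.mem_sdiff, Set.mem_preimage, Set.mem_sep_iff, Set.mem_sep_iff, hmem, Prod.snd_swap]
    refine and_congr_right fun hq => ?_
    rw [two_dvd_fst_iff_not_two_dvd_snd hn hq, and_iff_right hq]
  rw [← Set.ncard_sdiff_add_ncard_of_subset (Set.sep_subset _ _) (finite_normSumFiber n), hswap,
    Set.ncard_preimage_of_injective_subset_range Prod.swap_injective
      (Prod.swap_surjective.range_eq ▸ Set.subset_univ _), two_mul]

theorem ncard_normSumFiber_sep_two_dvd_snd {n : ℕ} (hn : Odd n) :
    {q ∈ normSumFiber n | 2 ∣ q.2}.ncard = 3 * (congrNormSumFiber n 1).ncard := by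
  obtain ⟨u, hu⟩ : IsUnit (ω : EisensteinInt) := isUnit_iff_norm_isUnit.mpr isUnit_one
  have hiUnion : {q ∈ normSumFiber n | 2 ∣ q.2} =
      ⋃ i : Fin 3, congrNormSumFiber n (u ^ (i : ℕ) : EisensteinIntˣ) := by
    ext q
    simp only [congrNormSumFiber, Set.mem_iUnion, Set.mem_sep_iff, exists_and_left,
      exists_and_right, Units.val_pow_eq_pow_val, hu]
    refine and_congr_right fun hq => (and_iff_right_of_imp fun h2 => ?_).symm
    have h1 : ¬2 ∣ q.1 := by rwa [two_dvd_fst_iff_not_two_dvd_snd hn hq, not_not]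
    exact (existsUnique_two_dvd_sub_omega_pow h1).exists
  rw [hiUnion, Set.ncard_iUnion_of_finite, finsum_eq_sum_of_fintype]
  · simp only [ncard_congrNormSumFiber_unit, sum_const, card_univ, Fintype.card_fin, smul_eq_mul]
  · exact fun _ => (finite_normSumFiber n).sep _
  · intro i j hij
    refine Set.disjoint_left.mpr fun q ⟨hq, hi, h2⟩ ⟨_, hj, _⟩ => hij ?_
    have h1 : ¬2 ∣ q.1 := by rwa [two_dvd_fst_iff_not_two_dvd_snd hn hq, not_not]
    rw [Units.val_pow_eq_pow_val, hu] at hi hj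
    exact (existsUnique_two_dvd_sub_omega_pow h1).unique hi hj

theorem congrNormSumFiber_one_of_even {n : ℕ} (hn : Even n) : congrNormSumFiber n 1 = ∅ := by
  refine Set.eq_empty_of_forall_notMem fun q ⟨hq, h1, h2⟩ => ?_
  have hfst : ¬2 ∣ q.1 := fun h => absurd (two_dvd_iff.mp ((dvd_sub_right h).mp h1)).1 (by decide)
  have heven : Even (q.1.norm + q.2.norm) := hq ▸ (Int.even_coe_nat n).mpr hn
  rw [two_dvd_iff_even_norm] at hfst h2
  exact hfst ((Int.even_add.mp heven).mpr h2)

end EisensteinInt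

/-! ### The number of elements of given norm -/

theorem legendreSym_three_natCast (n : ℕ) :
    legendreSym 3 n = if n % 3 = 0 then 0 else if n % 3 = 1 then 1 else -1 := by
  have hmod : (n : ℤ) % (3 : ℕ) = (n % 3 : ℕ) := rfl
  have hdecide : ∀ k < 3, legendreSym 3 (k : ℕ) = if k = 0 then 0 else if k = 1 then 1 else -1 := by
    decide
  rw [legendreSym.mod, hmod, hdecide _ (Nat.mod_lt n three_pos)]

/-- The recursion `f (p n) = (1 + c p) f n - c p f (n / p)` at all primes `p`, with `f (n / p)` read
as `0` when `p ∤ n`. It is the Hecke relation for `∑_{d ∣ n} c d` and determines `f` on positive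
integers up to the scalar `f 1`. -/
def SatisfiesHeckeRecursion (c f : ℕ → ℤ) : Prop :=
  ∀ ⦃p : ℕ⦄, p.Prime → ∀ n, f (p * n) = (1 + c p) * f n - c p * if p ∣ n then f (n / p) else 0

theorem SatisfiesHeckeRecursion.eq_mul_of_one {c f g : ℕ → ℤ} {a : ℤ}
    (hf : SatisfiesHeckeRecursion c f) (hg : SatisfiesHeckeRecursion c g) (h1 : f 1 = a * g 1)
    {n : ℕ} (hn : n ≠ 0) : f n = a * g n := by
  induction n using Nat.strong_induction_on with
  | h n ih =>
    obtain rfl | hn1 := eq_or_ne n 1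
    · exact h1
    obtain ⟨p, hp, m, rfl⟩ := Nat.exists_prime_and_dvd hn1
    have hm : m ≠ 0 := right_ne_zero_of_mul hn
    have hlt : m < p * m := lt_mul_of_one_lt_left (Nat.pos_of_ne_zero hm) hp.one_lt
    rw [hf hp, hg hp, ih m hlt hm]
    split_ifs with hdvd
    · rw [ih (m / p) ((Nat.div_le_self m p).trans_lt hlt)
        (Nat.div_pos (Nat.le_of_dvd (Nat.pos_of_ne_zero hm) hdvd) hp.pos).ne']
      ring
    · ring

theorem filter_dvd_divisors_mul {k : ℕ} (hk : k ≠ 0) (n : ℕ) :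
    {d ∈ (k * n).divisors | k ∣ d} = n.divisors.image (k * ·) := by
  ext d
  rw [mem_filter, mem_image]
  constructor
  · rintro ⟨hd, e, rfl⟩
    rw [Nat.mem_divisors] at hd
    exact ⟨e, Nat.mem_divisors.mpr ⟨Nat.dvd_of_mul_dvd_mul_left (Nat.pos_of_ne_zero hk) hd.1,
      right_ne_zero_of_mul hd.2⟩, rfl⟩
  · rintro ⟨e, he, rfl⟩
    rw [Nat.mem_divisors] at he
    exact ⟨Nat.mem_divisors.mpr ⟨Nat.mul_dvd_mul_left k he.1, mul_ne_zero hk he.2⟩,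
      dvd_mul_right k e⟩

theorem sum_filter_dvd_divisors {M : Type*} [AddCommMonoid M] {k : ℕ} (hk : k ≠ 0) (n : ℕ)
    (f : ℕ → M) :
    ∑ d ∈ n.divisors with k ∣ d, f d = if k ∣ n then ∑ d ∈ (n / k).divisors, f (k * d) else 0 := by
  split_ifs with h
  · obtain ⟨m, rfl⟩ := h
    rw [filter_dvd_divisors_mul hk, sum_image (mul_right_injective₀ hk).injOn,
      Nat.mul_div_cancel_left m (Nat.pos_of_ne_zero hk)]
  · refine sum_eq_zero fun d hd => absurd ?_ h
    rw [mem_filter] at hd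
    exact hd.2.trans (Nat.dvd_of_mem_divisors hd.1)

theorem satisfiesHeckeRecursion_sum_divisors {c : ℕ → ℤ} (hc : ∀ a b, c (a * b) = c a * c b) :
    SatisfiesHeckeRecursion c fun n => ∑ d ∈ n.divisors, c d := by
  intro p hp n
  obtain rfl | hn := eq_or_ne n 0
  · simp
  have hpn := sum_filter_dvd_divisors hp.ne_zero (p * n) c
  have hn' := sum_filter_dvd_divisors hp.ne_zero n c
  simp only [hc, ← mul_sum] at hpn hn'
  rw [if_pos (dvd_mul_right p n), Nat.mul_div_cancel_left n hp.pos] at hpn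
  rw [← mul_ite_zero] at hn'
  have hnot : {d ∈ (p * n).divisors | ¬p ∣ d} = {d ∈ n.divisors | ¬p ∣ d} := by
    ext d
    simp only [mem_filter, Nat.mem_divisors, and_congr_left_iff]
    intro hd
    have hcop : d.Coprime p := ((Nat.Prime.coprime_iff_not_dvd hp).mpr hd).symm
    simp only [hcop.dvd_mul_left, ne_eq, mul_eq_zero, hp.ne_zero, hn, or_self]
  dsimp only
  rw [← sum_filter_add_sum_filter_not (p * n).divisors (p ∣ ·), hnot, hpn]
  linear_combination sum_filter_add_sum_filter_not n.divisors (p ∣ ·) c - hn'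

theorem satisfiesHeckeRecursion_ncard_normFiber :
    SatisfiesHeckeRecursion (fun n => legendreSym 3 n)
      fun n => (EisensteinInt.normFiber n).ncard := by
  intro p hp n
  dsimp only
  rw [legendreSym_three_natCast]
  obtain h | h | h : p % 3 = 0 ∨ p % 3 = 1 ∨ p % 3 = 2 := by omega
  · obtain rfl : 3 = p :=
      (Nat.prime_dvd_prime_iff_eq Nat.prime_three hp).mp (Nat.dvd_of_mod_eq_zero h)
    simp [EisensteinInt.ncard_normFiber_three_mul]
  · rw [h, if_neg one_ne_zero, if_pos rfl, one_mul, eq_sub_iff_add_eq]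
    exact_mod_cast EisensteinInt.ncard_normFiber_mul_of_mod_three_eq_one hp h n
  · rw [h, if_neg two_ne_zero, if_neg (by decide),
      EisensteinInt.ncard_normFiber_mul_of_prime_natCast hp
        (EisensteinInt.prime_natCast_of_mod_three_eq_two hp h)]
    push_cast
    ring

theorem ncard_normFiber {n : ℕ} (hn : n ≠ 0) :
    ((EisensteinInt.normFiber n).ncard : ℤ) = 6 * ∑ d ∈ n.divisors, legendreSym 3 d := by
  refine satisfiesHeckeRecursion_ncard_normFiber.eq_mul_of_one
    (satisfiesHeckeRecursion_sum_divisors fun p n => ?_) ?_ hn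
  · rw [Nat.cast_mul, legendreSym.mul]
  · rw [EisensteinInt.ncard_normFiber_one, Nat.divisors_one, sum_singleton]
    rfl

/-! ### Sums of divisors -/

theorem sigmaDiv_one (n : ℕ) : sigmaDiv n 1 = ∑ d ∈ n.divisors, (d : ℤ) := by
  rw [sigmaDiv, if_pos (one_dvd n), Nat.div_one]

theorem sigmaDiv_eq_zero {n k : ℕ} (h : ¬k ∣ n) : sigmaDiv n k = 0 :=
  if_neg h

theorem sigmaDiv_mul_left {k : ℕ} (hk : k ≠ 0) (n j : ℕ) :
    sigmaDiv (k * n) (k * j) = sigmaDiv n j := by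
  simp only [sigmaDiv, Nat.mul_dvd_mul_iff_left (Nat.pos_of_ne_zero hk),
    Nat.mul_div_mul_left n j (Nat.pos_of_ne_zero hk)]

theorem sigmaDiv_prime_mul {p k : ℕ} (hp : p.Prime) (hk : ¬p ∣ k) (n : ℕ) :
    sigmaDiv (p * n) k = (1 + p) * sigmaDiv n k - p * sigmaDiv n (p * k) := by
  have hcop : k.Coprime p := ((Nat.Prime.coprime_iff_not_dvd hp).mpr hk).symm
  by_cases h : k ∣ n
  · obtain ⟨m, rfl⟩ := h
    have hk0 : k ≠ 0 := by rintro rfl; exact hk (dvd_zero p)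
    have hself (j : ℕ) : sigmaDiv (k * j) k = ∑ d ∈ j.divisors, (d : ℤ) := by
      simpa only [mul_one, sigmaDiv_one] using sigmaDiv_mul_left hk0 j 1
    rw [mul_left_comm, hself, hself, mul_comm p k, sigmaDiv_mul_left hk0]
    exact satisfiesHeckeRecursion_sum_divisors Nat.cast_mul hp m
  · rw [sigmaDiv_eq_zero h, sigmaDiv_eq_zero (mt hcop.dvd_of_dvd_mul_left h),
      sigmaDiv_eq_zero fun h' => h (dvd_of_mul_left_dvd h')]
    ring

theorem sigmaDiv_combination_of_even {n : ℕ} (hn : Even n) :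
    2 * sigmaDiv n 1 - 6 * sigmaDiv n 2 - 6 * sigmaDiv n 3 + 4 * sigmaDiv n 4
      + 18 * sigmaDiv n 6 - 12 * sigmaDiv n 12 = 0 := by
  obtain ⟨m, rfl⟩ := even_iff_two_dvd.mp hn
  have h1 := sigmaDiv_prime_mul Nat.prime_two (k := 1) (by decide) m
  have h3 := sigmaDiv_prime_mul Nat.prime_two (k := 3) (by decide) m
  rw [h1, h3, sigmaDiv_mul_left two_ne_zero m 1, sigmaDiv_mul_left two_ne_zero m 2,
    sigmaDiv_mul_left two_ne_zero m 3, sigmaDiv_mul_left two_ne_zero m 6]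
  push_cast
  ring

theorem sigmaDiv_combination_of_odd {n : ℕ} (hn : Odd n) :
    2 * sigmaDiv n 1 - 6 * sigmaDiv n 2 - 6 * sigmaDiv n 3 + 4 * sigmaDiv n 4
      + 18 * sigmaDiv n 6 - 12 * sigmaDiv n 12 = 2 * (sigmaDiv n 1 - 3 * sigmaDiv n 3) := by
  have hzero {k : ℕ} (hk : 2 ∣ k) : sigmaDiv n k = 0 :=
    sigmaDiv_eq_zero fun h => hn.not_two_dvd_nat (hk.trans h)
  rw [hzero (k := 2) (by decide), hzero (k := 4) (by decide), hzero (k := 6) (by decide),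
    hzero (k := 12) (by decide)]
  ring

/-! ### Liouville's identity -/

/-- The quadruples `((a, x), (b, y))` of positive integers with `a * x + b * y = n`, the index set
of Liouville's elementary identities. -/
def posQuads (n : ℕ) : Finset ((ℕ × ℕ) × (ℕ × ℕ)) :=
  (antidiagonal n).biUnion fun k => k.1.divisorsAntidiagonal ×ˢ k.2.divisorsAntidiagonal

theorem mem_posQuads {n : ℕ} {q : (ℕ × ℕ) × (ℕ × ℕ)} :
    q ∈ posQuads n ↔ q.1.1 * q.1.2 + q.2.1 * q.2.2 = n ∧
      0 < q.1.1 ∧ 0 < q.1.2 ∧ 0 < q.2.1 ∧ 0 < q.2.2 := by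
  simp only [posQuads, mem_biUnion, HasAntidiagonal.mem_antidiagonal, mem_product,
    Nat.mem_divisorsAntidiagonal, Prod.exists, Nat.pos_iff_ne_zero]
  constructor
  · rintro ⟨k, j, rfl, ⟨rfl, h₁⟩, ⟨rfl, h₂⟩⟩
    simpa [and_assoc] using And.intro h₁ h₂
  · rintro ⟨h, ha, hx, hb, hy⟩
    exact ⟨_, _, h, ⟨rfl, mul_ne_zero ha hx⟩, rfl, mul_ne_zero hb hy⟩

theorem sum_posQuads_mul {R : Type*} [NonUnitalNonAssocSemiring R] (f g : ℕ → R) (n : ℕ) :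
    ∑ q ∈ posQuads n, f q.1.1 * g q.2.1 =
      ∑ k ∈ antidiagonal n, (∑ d ∈ k.1.divisors, f d) * ∑ d ∈ k.2.divisors, g d := by
  rw [posQuads, sum_biUnion]
  · refine sum_congr rfl fun k _ => ?_
    rw [← Nat.sum_divisorsAntidiagonal (fun d _ => f d),
      ← Nat.sum_divisorsAntidiagonal (fun d _ => g d), sum_mul_sum, sum_product]
  · intro k _ l _ hkl
    refine Finset.disjoint_left.mpr fun q hq hq' => hkl ?_
    simp only [mem_product, Nat.mem_divisorsAntidiagonal] at hq hq'
    exact Prod.ext (hq.1.1.symm.trans hq'.1.1) (hq.2.1.symm.trans hq'.2.1)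

section PosQuads

variable {M : Type*} [AddCommMonoid M] (n : ℕ) (g : (ℕ × ℕ) × (ℕ × ℕ) → M)

theorem sum_posQuads_eq_sum_lt_add_sum_eq (u : ℕ × ℕ → ℕ) :
    ∑ q ∈ posQuads n, g q = ∑ q ∈ posQuads n with u q.2 < u q.1, (g q + g q.swap) +
      ∑ q ∈ posQuads n with u q.1 = u q.2, g q := by
  have hswap : ∑ q ∈ posQuads n with u q.1 < u q.2, g q =
      ∑ q ∈ posQuads n with u q.2 < u q.1, g q.swap := by
    refine sum_equiv (Equiv.prodComm _ _) (fun q => ?_) fun q _ => rfl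
    simp only [mem_filter, mem_posQuads, Equiv.prodComm_apply, Prod.fst_swap, Prod.snd_swap,
      add_comm (q.2.1 * q.2.2)]
    tauto
  rw [sum_add_distrib, ← hswap]
  simp only [sum_filter, ← sum_add_distrib]
  refine sum_congr rfl fun q _ => ?_
  obtain h | h | h := lt_trichotomy (u q.1) (u q.2)
  · simp [h, h.ne, h.not_gt]
  · simp [h]
  · simp [h, h.ne', h.not_gt]

/- Liouville's substitution: `a x + b y = (a + b) y + a (x - y)`. -/
theorem sum_posQuads_snd_lt :
    ∑ q ∈ posQuads n with q.2.2 < q.1.2,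
        g ((q.1.1 + q.2.1, q.2.2), (q.1.1, q.1.2 - q.2.2)) =
      ∑ q ∈ posQuads n with q.2.1 < q.1.1, g q := by
  refine sum_bij' (fun q _ => ((q.1.1 + q.2.1, q.2.2), (q.1.1, q.1.2 - q.2.2)))
    (fun q _ => ((q.2.1, q.1.2 + q.2.2), (q.1.1 - q.2.1, q.1.2))) ?_ ?_ ?_ ?_ fun _ _ => rfl <;>
    simp only [mem_filter, mem_posQuads, Prod.forall] <;>
    rintro a x b y ⟨⟨rfl, ha, hx, hb, hy⟩, hlt⟩
  · obtain ⟨c, rfl⟩ := Nat.exists_eq_add_of_lt hlt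
    refine ⟨⟨?_, by omega, by omega, by omega, by omega⟩, by omega⟩
    rw [add_assoc, Nat.add_sub_cancel_left]
    ring
  · obtain ⟨c, rfl⟩ := Nat.exists_eq_add_of_lt hlt
    refine ⟨⟨?_, by omega, by omega, by omega, by omega⟩, by omega⟩
    rw [add_assoc, Nat.add_sub_cancel_left]
    ring
  · ext <;> dsimp only <;> omega
  · ext <;> dsimp only <;> omega

theorem sum_posQuads_snd_eq :
    ∑ q ∈ posQuads n with q.1.2 = q.2.2, g q =
      ∑ p ∈ n.divisorsAntidiagonal, ∑ i ∈ Ioo 0 p.1, g ((i, p.2), (p.1 - i, p.2)) := by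
  rw [← sum_sigma (s := n.divisorsAntidiagonal) (t := fun p => Ioo 0 p.1)
    (f := fun s => g ((s.2, s.1.2), (s.1.1 - s.2, s.1.2)))]
  refine sum_bij' (fun q _ => ⟨(q.1.1 + q.2.1, q.1.2), q.1.1⟩)
    (fun s _ => ((s.2, s.1.2), (s.1.1 - s.2, s.1.2))) ?_ ?_ ?_ ?_ ?_ <;>
    simp only [mem_filter, mem_posQuads, mem_sigma, Nat.mem_divisorsAntidiagonal, mem_Ioo,
      Prod.forall, Sigma.forall]
  · rintro a x b y ⟨⟨rfl, ha, hx, hb, hy⟩, rfl⟩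
    exact ⟨⟨add_mul a b x, by positivity⟩, ha, Nat.lt_add_of_pos_right hb⟩
  · rintro d e i ⟨⟨rfl, hde⟩, hi, hid⟩
    have he : 0 < e := Nat.pos_of_ne_zero (right_ne_zero_of_mul hde)
    exact ⟨⟨by rw [← add_mul, Nat.add_sub_cancel' hid.le], hi, he, Nat.sub_pos_of_lt hid, he⟩,
      trivial⟩
  · rintro a x b y ⟨-, rfl⟩
    simp
  · rintro d e i ⟨-, -, hid⟩
    simp [Nat.add_sub_cancel' hid.le]
  · rintro a x b y ⟨-, rfl⟩
    simp

theorem sum_posQuads_fst_eq :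
    ∑ q ∈ posQuads n with q.1.1 = q.2.1, g q =
      ∑ p ∈ n.divisorsAntidiagonal, ∑ i ∈ Ioo 0 p.2, g ((p.1, i), (p.1, p.2 - i)) := by
  rw [← Nat.map_swap_divisorsAntidiagonal, sum_map]
  refine .trans ?_ (sum_posQuads_snd_eq n fun q => g (q.1.swap, q.2.swap))
  refine sum_equiv ((Equiv.prodComm _ _).prodCongr (Equiv.prodComm _ _)) (fun q => ?_)
    fun q _ => rfl
  simp only [mem_filter, mem_posQuads, Equiv.prodCongr_apply, Prod.map, Equiv.prodComm_apply,
    Prod.fst_swap, Prod.snd_swap, mul_comm]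
  tauto

end PosQuads

theorem sum_posQuads_sub_sub_add (n : ℕ) {f : ℤ → ℤ} (hf : f.Even) :
    ∑ q ∈ posQuads n, (f (q.1.1 - q.2.1) - f (q.1.1 + q.2.1)) =
      ∑ q ∈ posQuads n with q.1.1 = q.2.1, (f 0 + 2 * f q.1.1) -
        ∑ q ∈ posQuads n with q.1.2 = q.2.2, (2 * f q.1.1 + f (q.1.1 + q.2.1)) := by
  have hsub : ∑ q ∈ posQuads n with q.2.1 < q.1.1, f (q.2.1 - q.1.1) =
      ∑ q ∈ posQuads n with q.2.1 < q.1.1, f (q.1.1 - q.2.1) :=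
    sum_congr rfl fun q _ => by rw [← hf, neg_sub]
  have hadd : ∑ q ∈ posQuads n with q.2.2 < q.1.2, f (q.2.1 + q.1.1) =
      ∑ q ∈ posQuads n with q.2.2 < q.1.2, f (q.1.1 + q.2.1) :=
    sum_congr rfl fun q _ => by rw [add_comm]
  have hdiag : ∑ q ∈ posQuads n with q.1.1 = q.2.1, f (q.1.1 - q.2.1) =
      ∑ q ∈ posQuads n with q.1.1 = q.2.1, f 0 :=
    sum_congr rfl fun q hq => by rw [(mem_filter.mp hq).2, sub_self]
  have e₁ := sum_posQuads_eq_sum_lt_add_sum_eq n (fun q => f (q.1.1 - q.2.1)) Prod.fst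
  have e₂ := sum_posQuads_eq_sum_lt_add_sum_eq n (fun q => f (q.1.1 + q.2.1)) Prod.snd
  have e₃ := sum_posQuads_eq_sum_lt_add_sum_eq n (fun q => f q.1.1) Prod.fst
  have e₄ := sum_posQuads_eq_sum_lt_add_sum_eq n (fun q => f q.1.1) Prod.snd
  have t₁ := sum_posQuads_snd_lt n fun q => f (q.1.1 - q.2.1)
  have t₂ := sum_posQuads_snd_lt n fun q => f q.1.1
  have t₃ := sum_posQuads_snd_lt n fun q => f q.2.1
  simp only [Prod.fst_swap, Prod.snd_swap, Nat.cast_add, add_sub_cancel_left, sum_add_distrib] at *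
  rw [sum_sub_distrib, ← mul_sum, ← mul_sum]
  linarith

theorem sum_posQuads_sub_sub_add_eq_sum_divisorsAntidiagonal (n : ℕ) {f : ℤ → ℤ} (hf : f.Even) :
    ∑ q ∈ posQuads n, (f (q.1.1 - q.2.1) - f (q.1.1 + q.2.1)) =
      ∑ p ∈ n.divisorsAntidiagonal,
        ((p.2 - 1) * (f 0 + 2 * f p.1) - ∑ i ∈ Ioo 0 p.1, (2 * f i + f p.1)) := by
  rw [sum_posQuads_sub_sub_add n hf, sum_posQuads_fst_eq, sum_posQuads_snd_eq, sum_sub_distrib]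
  congr 1
  · refine sum_congr rfl fun p hp => ?_
    have : p.2 ≠ 0 := Nat.right_ne_zero_of_mem_divisorsAntidiagonal hp
    dsimp only
    rw [sum_const, Nat.card_Ioo, nsmul_eq_mul, Nat.sub_zero, Nat.cast_pred (by omega)]
  · refine sum_congr rfl fun p _ => sum_congr rfl fun i hi => ?_
    rw [Nat.cast_sub (mem_Ioo.mp hi).2.le, add_sub_cancel]

/-- The indicator function of the multiples of `3`, the even function to which Liouville's identity
is applied. -/
def threeDvdIndicator (k : ℤ) : ℤ := if 3 ∣ k then 1 else 0

theorem threeDvdIndicator_even : threeDvdIndicator.Even := fun k => by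
  simp only [threeDvdIndicator, dvd_neg]

theorem threeDvdIndicator_sub_sub_add (a b : ℤ) :
    threeDvdIndicator (a - b) - threeDvdIndicator (a + b) = legendreSym 3 a * legendreSym 3 b := by
  have hZMod : ∀ x y : ZMod 3, ((if x - y = 0 then 1 else 0) - if x + y = 0 then 1 else 0 : ℤ) =
      quadraticChar (ZMod 3) x * quadraticChar (ZMod 3) y := by decide
  have hdvd (k : ℤ) : threeDvdIndicator k = if (k : ZMod 3) = 0 then 1 else 0 :=
    if_congr (ZMod.intCast_zmod_eq_zero_iff_dvd k 3).symm rfl rfl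
  rw [hdvd, hdvd, Int.cast_sub, Int.cast_add]
  exact hZMod a b

theorem sum_Ioo_threeDvdIndicator (d : ℕ) :
    ∑ i ∈ Ioo 0 d, threeDvdIndicator i = ((d - 1) / 3 : ℕ) := by
  have hIoo : Ioo 0 d = Ioc 0 (d - 1) := by
    ext i
    simp only [mem_Ioo, mem_Ioc]
    omega
  rw [hIoo, ← Nat.Ioc_filter_dvd_card_eq_div]
  simp only [threeDvdIndicator, sum_boole]
  norm_cast

theorem liouville_term_threeDvdIndicator {d : ℕ} (hd : d ≠ 0) (e : ℤ) :
    3 * ((e - 1) * (threeDvdIndicator 0 + 2 * threeDvdIndicator d) -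
        ∑ i ∈ Ioo 0 d, (2 * threeDvdIndicator i + threeDvdIndicator d)) =
      3 * e - 2 * d - legendreSym 3 d + if 3 ∣ d then 6 * e - 3 * d else 0 := by
  rw [sum_add_distrib, ← mul_sum, sum_Ioo_threeDvdIndicator, sum_const, Nat.card_Ioo, nsmul_eq_mul,
    Nat.sub_zero, Nat.cast_pred (Nat.pos_of_ne_zero hd), legendreSym_three_natCast]
  simp only [threeDvdIndicator]
  split_ifs <;> omega

theorem sum_filter_three_dvd_div (n : ℕ) :
    ∑ d ∈ n.divisors with 3 ∣ d, ((n / d : ℕ) : ℤ) = sigmaDiv n 3 := by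
  rw [sum_filter_dvd_divisors three_ne_zero, sigmaDiv]
  simp only [← Nat.div_div_eq_div_mul]
  rw [Nat.sum_div_divisors (n / 3) (fun d => (d : ℤ))]

theorem sum_divisors_legendreSym_three_convolution (n : ℕ) :
    3 * ∑ k ∈ antidiagonal n,
      (∑ d ∈ k.1.divisors, legendreSym 3 d) * ∑ d ∈ k.2.divisors, legendreSym 3 d =
      sigmaDiv n 1 - 3 * sigmaDiv n 3 - ∑ d ∈ n.divisors, legendreSym 3 d := by
  have hdiv : ∑ d ∈ n.divisors with 3 ∣ d, (d : ℤ) = 3 * sigmaDiv n 3 := by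
    rw [sum_filter_dvd_divisors three_ne_zero, sigmaDiv, mul_ite_zero, mul_sum]
    simp only [Nat.cast_mul, Nat.cast_ofNat]
  rw [← sum_posQuads_mul (fun d => legendreSym 3 d) (fun d => legendreSym 3 d)]
  simp only [← threeDvdIndicator_sub_sub_add]
  rw [sum_posQuads_sub_sub_add_eq_sum_divisorsAntidiagonal n threeDvdIndicator_even, mul_sum,
    sum_congr rfl fun p hp => liouville_term_threeDvdIndicator
      (Nat.left_ne_zero_of_mem_divisorsAntidiagonal hp) p.2,
    Nat.sum_divisorsAntidiagonal fun d e =>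
      3 * (e : ℤ) - 2 * d - legendreSym 3 d + if 3 ∣ d then 6 * (e : ℤ) - 3 * d else 0,
    sum_add_distrib, sum_sub_distrib, sum_sub_distrib, ← sum_filter, sum_sub_distrib]
  simp only [← mul_sum]
  rw [hdiv, sum_filter_three_dvd_div, Nat.sum_div_divisors n (fun d => (d : ℤ)), sigmaDiv_one]
  ring

/-! ### Counting solutions -/

theorem sum_antidiagonal_ncard_normFiber_mul {n : ℕ} (hn : n ≠ 0) :
    ∑ k ∈ antidiagonal n,
        ((EisensteinInt.normFiber k.1).ncard * (EisensteinInt.normFiber k.2).ncard : ℤ) =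
      12 * (sigmaDiv n 1 - 3 * sigmaDiv n 3) := by
  let r : PowerSeries ℤ := .mk fun k => (EisensteinInt.normFiber k).ncard
  let δ : PowerSeries ℤ := .mk fun k => ∑ d ∈ k.divisors, legendreSym 3 d
  have hr : r = 1 + PowerSeries.C 6 * δ := by
    ext k
    rw [map_add, PowerSeries.coeff_C_mul, PowerSeries.coeff_mk, PowerSeries.coeff_mk,
      PowerSeries.coeff_one]
    split_ifs with hk
    · simp [hk, EisensteinInt.normFiber_zero]
    · rw [ncard_normFiber hk, zero_add]
  have hsq : r * r = 1 + (PowerSeries.C 12 * δ + PowerSeries.C 36 * (δ * δ)) := by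
    rw [hr, map_ofNat, map_ofNat, map_ofNat]
    ring
  have hcoeff := congrArg (PowerSeries.coeff n) hsq
  rw [map_add, map_add, PowerSeries.coeff_C_mul, PowerSeries.coeff_C_mul, PowerSeries.coeff_one,
    if_neg hn, PowerSeries.coeff_mul, PowerSeries.coeff_mul] at hcoeff
  simp only [r, δ, PowerSeries.coeff_mk] at hcoeff
  linear_combination hcoeff + 12 * sum_divisors_legendreSym_three_convolution n

theorem six_mul_ncard_congrNormSumFiber_one {n : ℕ} (hn : Odd n) :
    (6 * (EisensteinInt.congrNormSumFiber n 1).ncard : ℤ) =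
      12 * (sigmaDiv n 1 - 3 * sigmaDiv n 3) := by
  have h := EisensteinInt.ncard_normSumFiber_eq_two_mul hn
  rw [EisensteinInt.ncard_normSumFiber_sep_two_dvd_snd hn,
    EisensteinInt.ncard_normSumFiber] at h
  rw [← sum_antidiagonal_ncard_normFiber_mul hn.pos.ne']
  push_cast [← mul_assoc] at h
  exact_mod_cast h.symm

/-- Two Eisenstein integers `x₁ + x₂ ω` and `x₃ + x₄ ω`, encoded by the vector of their
coordinates. -/
def vecEquivPair : (Fin 4 → ℤ) ≃ EisensteinInt × EisensteinInt where
  toFun x := (⟨x 0, x 1⟩, ⟨x 2, x 3⟩)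
  invFun q := ![q.1.re, q.1.im, q.2.re, q.2.im]
  left_inv x := by
    ext i
    fin_cases i <;> rfl
  right_inv _ := rfl

theorem setOf_hexForms_eq_preimage (n : ℕ) :
    {x : Fin 4 → ℤ | x 0 ^ 2 + x 0 * x 1 + x 1 ^ 2 + x 2 ^ 2 + x 2 * x 3 + x 3 ^ 2 = (n : ℤ) ∧
        x 0 % 2 = 1 ∧ x 1 % 2 = 0 ∧ x 2 % 2 = 0 ∧ x 3 % 2 = 0} =
      vecEquivPair ⁻¹' EisensteinInt.congrNormSumFiber n 1 := by
  ext x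
  have hz : 2 ∣ (vecEquivPair x).1 - 1 ↔ 2 ∣ x 0 - 1 ∧ 2 ∣ x 1 - 0 := EisensteinInt.two_dvd_iff
  have hw : 2 ∣ (vecEquivPair x).2 ↔ 2 ∣ x 2 ∧ 2 ∣ x 3 := EisensteinInt.two_dvd_iff
  have hsum : vecEquivPair x ∈ EisensteinInt.normSumFiber n ↔
      x 0 ^ 2 + x 0 * x 1 + x 1 ^ 2 + x 2 ^ 2 + x 2 * x 3 + x 3 ^ 2 = n := by
    rw [EisensteinInt.normSumFiber, Set.mem_ofPred, EisensteinInt.norm_eq, EisensteinInt.norm_eq,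
      ← add_assoc, ← add_assoc]
    rfl
  rw [Set.mem_preimage, EisensteinInt.congrNormSumFiber, Set.mem_sep_iff, Set.mem_ofPred, hsum,
    hz, hw]
  exact and_congr_right' (by omega)

theorem rep_sum_two_hex_forms_1000_mod2 (n : ℕ) (hn : 0 < n) :
    ({x : Fin 4 → ℤ | x 0 ^ 2 + x 0 * x 1 + x 1 ^ 2 + x 2 ^ 2 + x 2 * x 3 + x 3 ^ 2 = (n : ℤ) ∧
        x 0 % 2 = 1 ∧ x 1 % 2 = 0 ∧ x 2 % 2 = 0 ∧ x 3 % 2 = 0}.ncard : ℤ) =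
      2 * sigmaDiv n 1 - 6 * sigmaDiv n 2 - 6 * sigmaDiv n 3 + 4 * sigmaDiv n 4
        + 18 * sigmaDiv n 6 - 12 * sigmaDiv n 12 := by
  rw [setOf_hexForms_eq_preimage, Set.ncard_preimage_of_injective_subset_range
    vecEquivPair.injective (vecEquivPair.range_eq_univ ▸ Set.subset_univ _)]
  obtain heven | hodd := n.even_or_odd
  · rw [EisensteinInt.congrNormSumFiber_one_of_even heven, Set.ncard_empty, Nat.cast_zero,
      sigmaDiv_combination_of_even heven]
  · rw [sigmaDiv_combination_of_odd hodd]
    linarith [six_mul_ncard_congrNormSumFiber_one hodd]
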